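/- arXiv:2508.02615 — 2 statements merged into one kernel-verified Lean document; each statement's English description precedes it below -/
import Mathlib

section
/- Let (E,d_E) be a metric space, let m, n ∈ ℕ, and let x_{i,j} ∈ E and y_{i,j} ∈ E for 1 ≤ i ≤ m and 1 ≤ j ≤ n. Let s₁,…,s_m be independent Rademacher random variables (ℙ(s_i = 1) = ℙ(s_i = −1) = 1/2). Then 𝔼 sup_{‖f‖_Lip ≤ 1} ∑_{i=1}^m s_i ∑_{j=1}^n (f(x_{i,j}) − f(y_{i,j})) ≥ (1/√(28·m·ln(2mn))) · ∑_{i=1}^m sup_{‖f‖_Lip ≤ 1} ∑_{j=1}^n (f(x_{i,j}) − f(y_{i,j})), where the suprema are over all f : E → ℝ with ‖f‖_Lip ≤ 1. -/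
open MeasureTheory Filter

/-!
Write `L i` for the linear functional `f ↦ ∑ j, (f (x i j) - f (y i j))`. Choose, for each `i`, a
function `f i` nearly attaining the `i`-th supremum, and test the supremum inside the expectation
with the random function `F = ∑ k, s k • f k`. As `𝔼 (s i * s k) = δ i k`, the expectation of
`∑ i, s i * L i F` is exactly `∑ i, L i (f i)`. By Hoeffding's inequality and a union bound over
pairs of points, with high probability `F` is `K`-Lipschitz on the finitely many points involved,
`K ≈ √(m * log (2 * m * n))`, and then McShane's extension theorem compares its value with `K` times
the supremum. On the exceptional event `F` is still `m`-Lipschitz, which is enough.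
-/

open scoped NNReal Finset

section RademacherSums

/-- The value `±1` of a Rademacher variable encoded as a boolean. Expectations over independent
Rademacher variables indexed by `ι` are averages over all `ε : ι → Bool`. -/
noncomputable def rademacherSign (b : Bool) : ℝ := if b then 1 else -1

lemma abs_rademacherSign (b : Bool) : |rademacherSign b| = 1 := by
  cases b <;> simp [rademacherSign]

lemma rademacherSign_mul_self (b : Bool) : rademacherSign b * rademacherSign b = 1 := by
  cases b <;> simp [rademacherSign]

lemma rademacherSign_not (b : Bool) : rademacherSign (!b) = -rademacherSign b := by
  cases b <;> simp [rademacherSign]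

lemma rademacherSign_mul_le_abs (b : Bool) (a : ℝ) : rademacherSign b * a ≤ |a| :=
  (le_abs_self _).trans_eq <| by rw [abs_mul, abs_rademacherSign, one_mul]

variable {ι M : Type*} [Fintype ι] [AddCommGroup M] [Module ℝ M]

/-- The Rademacher sum of the vectors `v i` at the sign pattern `ε`. -/
noncomputable def rademacherSum (v : ι → M) (ε : ι → Bool) : M := ∑ i, rademacherSign (ε i) • v i

lemma map_rademacherSum {N : Type*} [AddCommGroup N] [Module ℝ N] (T : M →ₗ[ℝ] N) (v : ι → M)
    (ε : ι → Bool) : T (rademacherSum v ε) = rademacherSum (fun i ↦ T (v i)) ε := by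
  simp only [rademacherSum, map_sum, map_smul]

lemma rademacherSum_dual_apply (L : ι → Module.Dual ℝ M) (ε : ι → Bool) (v : M) :
    rademacherSum L ε v = ∑ i, rademacherSign (ε i) * L i v := by
  simp only [rademacherSum, LinearMap.sum_apply, LinearMap.smul_apply, smul_eq_mul]

lemma rademacherSum_le_sum_abs (a : ι → ℝ) (ε : ι → Bool) : rademacherSum a ε ≤ ∑ i, |a i| :=
  Finset.sum_le_sum fun i _ ↦ rademacherSign_mul_le_abs (ε i) (a i)

lemma rademacherSum_apply_sub {E : Type*} (F : ι → E → ℝ) (ε : ι → Bool) (p q : E) :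
    rademacherSum F ε p - rademacherSum F ε q = rademacherSum (fun i ↦ F i p - F i q) ε :=
  map_rademacherSum (LinearMap.proj (φ := fun _ ↦ ℝ) p - LinearMap.proj (R := ℝ) q) F ε

lemma dependsOn_rademacherSum {E : Type*} {L : ι → Module.Dual ℝ (E → ℝ)} {s : Set E}
    (hs : ∀ i, DependsOn ⇑(L i) s) (ε : ι → Bool) :
    DependsOn ⇑(rademacherSum L ε) s := fun f g hfg ↦ by
  simp only [rademacherSum_dual_apply, hs _ hfg]

variable [DecidableEq ι]

lemma sum_rademacherSign_mul_rademacherSign (i k : ι) :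
    ∑ ε : ι → Bool, rademacherSign (ε i) * rademacherSign (ε k)
      = if i = k then 2 ^ Fintype.card ι else 0 := by
  split_ifs with hik
  · simp [hik, rademacherSign_mul_self]
  · refine Finset.sum_involution (fun ε _ ↦ Function.update ε i (!ε i)) (fun ε _ ↦ ?_)
      (fun ε _ _ hε ↦ ?_) (fun ε _ ↦ Finset.mem_univ _) (fun ε _ ↦ by simp)
    · simp only [Function.update_self, Function.update_of_ne (Ne.symm hik), rademacherSign_not]
      ring
    · simpa using congrFun hε i

lemma sum_rademacherSum_apply_rademacherSum (L : ι → Module.Dual ℝ M) (v : ι → M) :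
    ∑ ε : ι → Bool, rademacherSum L ε (rademacherSum v ε)
      = 2 ^ Fintype.card ι * ∑ i, L i (v i) := by
  calc ∑ ε : ι → Bool, rademacherSum L ε (rademacherSum v ε)
      = ∑ ε : ι → Bool, ∑ i, ∑ k, rademacherSign (ε i) * rademacherSign (ε k) * L i (v k) := by
        simp only [rademacherSum_dual_apply]
        simp only [map_rademacherSum]
        simp only [rademacherSum, smul_eq_mul, Finset.mul_sum, mul_assoc]
    _ = ∑ i, ∑ k, (∑ ε : ι → Bool, rademacherSign (ε i) * rademacherSign (ε k)) * L i (v k) := by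
        rw [Finset.sum_comm]
        refine Finset.sum_congr rfl fun i _ ↦ ?_
        simp only [Finset.sum_comm (s := Finset.univ (α := ι → Bool)), Finset.sum_mul]
    _ = 2 ^ Fintype.card ι * ∑ i, L i (v i) := by
        simp [sum_rademacherSign_mul_rademacherSign, Finset.mul_sum]

lemma sum_exp_rademacherSum_le (a : ι → ℝ) :
    ∑ ε : ι → Bool, Real.exp (rademacherSum a ε)
      ≤ 2 ^ Fintype.card ι * Real.exp ((∑ i, a i ^ 2) / 2) := by
  calc ∑ ε : ι → Bool, Real.exp (rademacherSum a ε)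
      = ∏ i, ∑ b : Bool, Real.exp (rademacherSign b * a i) := by
        simp only [rademacherSum, smul_eq_mul, Real.exp_sum, Finset.prod_univ_sum,
          Fintype.piFinset_univ]
    _ = ∏ i, 2 * Real.cosh (a i) := by
        refine Finset.prod_congr rfl fun i _ ↦ ?_
        simp only [rademacherSign, Fintype.sum_bool, Real.cosh_eq, if_true, Bool.false_eq_true,
          if_false, one_mul, neg_one_mul]
        ring
    _ ≤ ∏ i, 2 * Real.exp (a i ^ 2 / 2) := by
        gcongr with i
        exact Real.cosh_le_exp_half_sq _
    _ = 2 ^ Fintype.card ι * Real.exp ((∑ i, a i ^ 2) / 2) := by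
        simp [Finset.prod_mul_distrib, Real.exp_sum, Finset.sum_div]

lemma hoeffding_card_mul_lt_rademacherSum_le {a : ι → ℝ} {σ t : ℝ} (hσ : 0 < σ)
    (ha : ∑ i, a i ^ 2 ≤ σ ^ 2) (ht : 0 ≤ t) :
    (#{ε : ι → Bool | t * σ < rademacherSum a ε} : ℝ)
      ≤ 2 ^ Fintype.card ι * Real.exp (-(t ^ 2 / 2)) := by
  have markov : (#{ε : ι → Bool | t * σ < rademacherSum a ε} : ℝ) * Real.exp (t ^ 2)
      ≤ ∑ ε : ι → Bool, Real.exp (rademacherSum (fun i ↦ t / σ * a i) ε) := by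
    rw [← nsmul_eq_mul]
    refine (Finset.card_nsmul_le_sum _ _ _ fun ε hε ↦ Real.exp_le_exp.mpr ?_).trans
      (Finset.sum_le_univ_sum_of_nonneg fun ε ↦ (Real.exp_pos _).le)
    calc t ^ 2 = t / σ * (t * σ) := by field_simp
      _ ≤ t / σ * rademacherSum a ε := by
        gcongr
        exact (Finset.mem_filter.mp hε).2.le
      _ = rademacherSum (fun i ↦ t / σ * a i) ε :=
        map_rademacherSum (LinearMap.mulLeft ℝ (t / σ)) a ε
  have variance_le : ∑ i, (t / σ * a i) ^ 2 ≤ t ^ 2 := by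
    calc ∑ i, (t / σ * a i) ^ 2 = (t / σ) ^ 2 * ∑ i, a i ^ 2 := by
          simp only [mul_pow, Finset.mul_sum]
      _ ≤ (t / σ) ^ 2 * σ ^ 2 := by gcongr
      _ = t ^ 2 := by field_simp
  rw [← mul_le_mul_iff_left₀ (Real.exp_pos (t ^ 2)), mul_assoc, ← Real.exp_add]
  calc _ ≤ _ := markov
    _ ≤ _ := sum_exp_rademacherSum_le _
    _ ≤ 2 ^ Fintype.card ι * Real.exp (t ^ 2 / 2) := by gcongr
    _ = _ := by ring_nf

end RademacherSums

lemma sum_ciSup_le_of_forall_sum_le {ι β : Type*} [Fintype ι] [Nonempty β] {g : ι → β → ℝ} {C : ℝ}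
    (h : ∀ b : ι → β, ∑ i, g i (b i) ≤ C) : ∑ i, ⨆ b, g i b ≤ C := by
  suffices ∀ η > 0, ∑ i, (⨆ b, g i b) ≤ C + Fintype.card ι * η by
    refine le_of_forall_pos_le_add fun δ hδ ↦
      (this (δ / (Fintype.card ι + 1)) (by positivity)).trans ?_
    gcongr
    rw [mul_div_assoc', div_le_iff₀ (by positivity)]
    linarith
  intro η hη
  choose b hb using fun i ↦ exists_lt_of_lt_ciSup (sub_lt_self (⨆ b, g i b) hη)
  calc ∑ i, ⨆ b, g i b ≤ ∑ i, (g i (b i) + η) :=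
        Finset.sum_le_sum fun i _ ↦ sub_le_iff_le_add.mp (hb i).le
    _ = ∑ i, g i (b i) + Fintype.card ι * η := by simp [Finset.sum_add_distrib]
    _ ≤ C + Fintype.card ι * η := by gcongr; exact h b

section LipDualNorm

variable {E : Type*} [PseudoMetricSpace E] {L : Module.Dual ℝ (E → ℝ)} {f : E → ℝ} {K : ℝ≥0}

/-- A linear functional on real functions is Lipschitz-bounded if it is bounded above on the
`1`-Lipschitz functions. -/
def LipBounded (L : Module.Dual ℝ (E → ℝ)) : Prop :=
  BddAbove (Set.range fun f : {f : E → ℝ // LipschitzWith 1 f} ↦ L f.1)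

/-- The norm of a linear functional dual to the Lipschitz seminorm. It has the junk value `0`
unless `LipBounded L`. -/
noncomputable def lipDualNorm (L : Module.Dual ℝ (E → ℝ)) : ℝ :=
  ⨆ f : {f : E → ℝ // LipschitzWith 1 f}, L f.1

instance : Nonempty {f : E → ℝ // LipschitzWith 1 f} := ⟨⟨0, LipschitzWith.const' 0⟩⟩

lemma lipDualNorm_nonneg (L : Module.Dual ℝ (E → ℝ)) : 0 ≤ lipDualNorm L :=
  Real.iSup_nonneg' ⟨⟨0, LipschitzWith.const' 0⟩, (map_zero L).ge⟩

namespace LipBounded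

lemma apply_le (hL : LipBounded L) (hf : LipschitzWith 1 f) : L f ≤ lipDualNorm L :=
  le_ciSup hL ⟨f, hf⟩

lemma abs_apply_le (hL : LipBounded L) (hf : LipschitzWith 1 f) : |L f| ≤ lipDualNorm L :=
  abs_le'.mpr ⟨hL.apply_le hf, by simpa using hL.apply_le hf.neg⟩

lemma apply_le_mul (hL : LipBounded L) (hK : 0 < K) (hf : LipschitzWith K f) :
    L f ≤ K * lipDualNorm L := by
  have hscaled : LipschitzWith 1 ((K⁻¹ : ℝ) • f) := by
    refine LipschitzWith.mk_one fun p q ↦ ?_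
    rw [Pi.smul_apply, Pi.smul_apply, dist_smul₀, norm_inv, NNReal.norm_eq,
      inv_mul_le_iff₀ (by exact_mod_cast hK)]
    exact hf.dist_le_mul p q
  have := hL.apply_le hscaled
  rwa [map_smul, smul_eq_mul, inv_mul_le_iff₀ (by exact_mod_cast hK)] at this

lemma apply_le_mul_of_lipschitzOnWith {s : Set E} (hL : LipBounded L) (hs : DependsOn ⇑L s)
    (hK : 0 < K) (hf : LipschitzOnWith K f s) : L f ≤ K * lipDualNorm L := by
  obtain ⟨g, hg, hfg⟩ := hf.extend_real
  rw [hs hfg]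
  exact hL.apply_le_mul hK hg

end LipBounded

variable {ι : Type*} [Fintype ι] {Φ : ι → Module.Dual ℝ (E → ℝ)}

lemma rademacherSum_apply_le_sum_lipDualNorm (hΦ : ∀ i, LipBounded (Φ i)) (ε : ι → Bool)
    (hf : LipschitzWith 1 f) : rademacherSum Φ ε f ≤ ∑ i, lipDualNorm (Φ i) := by
  rw [rademacherSum_dual_apply]
  exact (rademacherSum_le_sum_abs _ ε).trans <|
    Finset.sum_le_sum fun i _ ↦ (hΦ i).abs_apply_le hf

lemma LipBounded.rademacherSum (hΦ : ∀ i, LipBounded (Φ i)) (ε : ι → Bool) :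
    LipBounded (rademacherSum Φ ε) :=
  ⟨_, Set.forall_mem_range.mpr fun f ↦ rademacherSum_apply_le_sum_lipDualNorm hΦ ε f.2⟩

lemma lipDualNorm_rademacherSum_le (hΦ : ∀ i, LipBounded (Φ i)) (ε : ι → Bool) :
    lipDualNorm (rademacherSum Φ ε) ≤ ∑ i, lipDualNorm (Φ i) :=
  ciSup_le fun f ↦ rademacherSum_apply_le_sum_lipDualNorm hΦ ε f.2

end LipDualNorm

section RandomLipschitz

variable {E ι : Type*} [PseudoMetricSpace E] [Fintype ι] {F : ι → E → ℝ}

lemma lipschitzWith_rademacherSum (hF : ∀ i, LipschitzWith 1 (F i)) (ε : ι → Bool) :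
    LipschitzWith (Fintype.card ι) (rademacherSum F ε) := by
  refine LipschitzWith.of_le_add_mul _ fun p q ↦ ?_
  rw [← sub_le_iff_le_add', rademacherSum_apply_sub]
  calc rademacherSum (fun i ↦ F i p - F i q) ε ≤ ∑ i, |F i p - F i q| :=
        rademacherSum_le_sum_abs _ ε
    _ ≤ ∑ _i : ι, dist p q := Finset.sum_le_sum fun i _ ↦ by
        simpa [Real.dist_eq] using (hF i).dist_le_mul p q
    _ = _ := by simp

variable [DecidableEq ι] [Nonempty ι]

lemma card_mul_dist_lt_rademacherSum_sub_le (hF : ∀ i, LipschitzWith 1 (F i)) (K : ℝ≥0)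
    (p q : E) :
    (#{ε : ι → Bool | K * dist p q < rademacherSum F ε p - rademacherSum F ε q} : ℝ)
      ≤ 2 ^ Fintype.card ι * Real.exp (-(K ^ 2 / (2 * Fintype.card ι))) := by
  have habs (i : ι) : |F i p - F i q| ≤ dist p q := by
    simpa [Real.dist_eq] using (hF i).dist_le_mul p q
  simp only [rademacherSum_apply_sub]
  rcases (dist_nonneg (x := p) (y := q)).eq_or_lt with hd | hd
  · have hnonpos (ε : ι → Bool) : rademacherSum (fun i ↦ F i p - F i q) ε ≤ 0 :=
      (rademacherSum_le_sum_abs _ ε).trans <|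
        Finset.sum_nonpos fun i _ ↦ (habs i).trans_eq hd.symm
    simp only [← hd, mul_zero, (hnonpos _).not_gt, Finset.filter_false, Finset.card_empty,
      Nat.cast_zero]
    positivity
  · set m := (Fintype.card ι : ℝ)
    have hm : 0 < m := by simp [m, Fintype.card_pos]
    have hvar : ∑ i, (F i p - F i q) ^ 2 ≤ (√m * dist p q) ^ 2 := by
      calc ∑ i, (F i p - F i q) ^ 2 ≤ ∑ _i : ι, dist p q ^ 2 := Finset.sum_le_sum fun i _ ↦
            sq_le_sq.mpr ((habs i).trans (le_abs_self _))
        _ = (√m * dist p q) ^ 2 := by simp [m, mul_pow]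
    have hthreshold : K / √m * (√m * dist p q) = K * dist p q := by field_simp
    have hexponent : (K / √m) ^ 2 / 2 = K ^ 2 / (2 * m) := by
      rw [div_pow, Real.sq_sqrt hm.le, div_div, mul_comm m]
    have := hoeffding_card_mul_lt_rademacherSum_le (t := K / √m) (by positivity) hvar
      (by positivity)
    rwa [hthreshold, hexponent] at this

open Classical in
lemma card_not_lipschitzOnWith_rademacherSum_le {σ : Type*} [Fintype σ] (p : σ → E)
    (hF : ∀ i, LipschitzWith 1 (F i)) (K : ℝ≥0) :
    (#{ε : ι → Bool | ¬ LipschitzOnWith K (rademacherSum F ε) (Set.range p)} : ℝ)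
      ≤ Fintype.card σ ^ 2 *
        (2 ^ Fintype.card ι * Real.exp (-(K ^ 2 / (2 * Fintype.card ι)))) := by
  let steep (ab : σ × σ) : Finset (ι → Bool) :=
    {ε | K * dist (p ab.1) (p ab.2) < rademacherSum F ε (p ab.1) - rademacherSum F ε (p ab.2)}
  have hsubset : {ε : ι → Bool | ¬ LipschitzOnWith K (rademacherSum F ε) (Set.range p)}
      ⊆ (Finset.univ.biUnion steep : Set (ι → Bool)) := by
    intro ε hε
    contrapose! hε
    simp only [steep, Finset.coe_biUnion, Set.mem_iUnion, not_exists] at hε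
    simp only [Set.mem_ofPred_eq, not_not]
    refine LipschitzOnWith.of_le_add_mul K ?_
    rintro _ ⟨a, rfl⟩ _ ⟨b, rfl⟩
    have hab : rademacherSum F ε (p a) - rademacherSum F ε (p b) ≤ K * dist (p a) (p b) := by
      simpa using hε (a, b)
    linarith
  calc (#{ε : ι → Bool | ¬ LipschitzOnWith K (rademacherSum F ε) (Set.range p)} : ℝ)
      ≤ #(Finset.univ.biUnion steep) := by
        gcongr
        simpa [← Finset.coe_subset] using hsubset
    _ ≤ ∑ ab, (#(steep ab) : ℝ) := by exact_mod_cast Finset.card_biUnion_le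
    _ ≤ ∑ _ab : σ × σ, 2 ^ Fintype.card ι * Real.exp (-(K ^ 2 / (2 * Fintype.card ι))) := by
        gcongr with ab
        exact card_mul_dist_lt_rademacherSum_sub_le hF K _ _
    _ = _ := by simp [sq]

end RandomLipschitz

/- The union bound runs over `N ^ 2` pairs of points and the exceptional event costs another factor
`m ≤ N / 2`, so a tail of at most `N⁻³` is enough. -/
lemma sq_mul_mul_exp_neg_le_half {m N K : ℝ} (hm : 0 < m) (hN : 1 ≤ N) (hmN : 2 * m ≤ N)
    (hK : K ^ 2 = 7 * m * Real.log N) :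
    N ^ 2 * m * Real.exp (-(K ^ 2 / (2 * m))) ≤ 1 / 2 := by
  have hlog : 0 ≤ Real.log N := Real.log_nonneg hN
  have hexp : Real.exp (-(K ^ 2 / (2 * m))) ≤ (N ^ 3)⁻¹ := by
    calc Real.exp (-(K ^ 2 / (2 * m))) = Real.exp (-(7 / 2 * Real.log N)) := by
          rw [hK]
          field_simp
      _ ≤ Real.exp (-(3 * Real.log N)) := by
          gcongr
          norm_num
      _ = (N ^ 3)⁻¹ := by
          rw [Real.exp_neg, ← Nat.cast_ofNat (n := 3), ← Real.log_pow, Real.exp_log (by positivity)]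
  calc N ^ 2 * m * Real.exp (-(K ^ 2 / (2 * m))) ≤ N ^ 2 * m * (N ^ 3)⁻¹ := by gcongr
    _ = m / N := by field_simp
    _ ≤ 1 / 2 := by
      rw [div_le_div_iff₀ (by positivity) two_pos]
      linarith

section Comparison

variable {E ι σ : Type*} [PseudoMetricSpace E] [Fintype ι] [Nonempty ι]
  [Fintype σ] {L : ι → Module.Dual ℝ (E → ℝ)} {F : ι → E → ℝ} {K : ℝ≥0}

open Classical in
lemma rademacherSum_apply_rademacherSum_le {s : Set E} (hL : ∀ i, LipBounded (L i))
    (hs : ∀ i, DependsOn ⇑(L i) s) (hF : ∀ i, LipschitzWith 1 (F i)) (hK : 0 < K)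
    (ε : ι → Bool) :
    rademacherSum L ε (rademacherSum F ε) ≤ K * lipDualNorm (rademacherSum L ε) +
      if LipschitzOnWith K (rademacherSum F ε) s
      then 0 else Fintype.card ι * ∑ i, lipDualNorm (L i) := by
  have hLε := LipBounded.rademacherSum hL ε
  split_ifs with hlip
  · rw [add_zero]
    exact hLε.apply_le_mul_of_lipschitzOnWith (dependsOn_rademacherSum hs ε) hK hlip
  · have hcard : (0 : ℝ≥0) < Fintype.card ι := by exact_mod_cast Fintype.card_pos
    calc rademacherSum L ε (rademacherSum F ε)
        ≤ Fintype.card ι * lipDualNorm (rademacherSum L ε) := by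
          exact_mod_cast hLε.apply_le_mul hcard (lipschitzWith_rademacherSum hF ε)
      _ ≤ Fintype.card ι * ∑ i, lipDualNorm (L i) := by
          gcongr
          exact lipDualNorm_rademacherSum_le hL ε
      _ ≤ _ := le_add_of_nonneg_left (mul_nonneg K.2 (lipDualNorm_nonneg _))

variable [DecidableEq ι]

open Classical in
lemma two_pow_mul_sum_apply_le {s : Set E} (hL : ∀ i, LipBounded (L i))
    (hs : ∀ i, DependsOn ⇑(L i) s) (hF : ∀ i, LipschitzWith 1 (F i)) (hK : 0 < K) :
    2 ^ Fintype.card ι * ∑ i, L i (F i)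
      ≤ K * ∑ ε : ι → Bool, lipDualNorm (rademacherSum L ε) +
        #{ε : ι → Bool | ¬ LipschitzOnWith K (rademacherSum F ε) s} *
          (Fintype.card ι * ∑ i, lipDualNorm (L i)) := by
  rw [← sum_rademacherSum_apply_rademacherSum]
  refine (Finset.sum_le_sum fun ε _ ↦
    rademacherSum_apply_rademacherSum_le hL hs hF hK ε).trans_eq ?_
  rw [Finset.sum_add_distrib, ← Finset.mul_sum, Finset.sum_ite, Finset.sum_const_zero, zero_add,
    Finset.sum_const, nsmul_eq_mul]

theorem sum_lipDualNorm_le (p : σ → E) (hL : ∀ i, LipBounded (L i))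
    (hp : ∀ i, DependsOn ⇑(L i) (Set.range p)) (hK : 0 < K)
    (htail : Fintype.card σ ^ 2 * Fintype.card ι * Real.exp (-(K ^ 2 / (2 * Fintype.card ι)))
      ≤ 1 / 2) :
    2 ^ Fintype.card ι * ∑ i, lipDualNorm (L i)
      ≤ 2 * K * ∑ ε : ι → Bool, lipDualNorm (rademacherSum L ε) := by
  classical
  set S := ∑ i, lipDualNorm (L i)
  have hS₀ : 0 ≤ S := Finset.sum_nonneg fun i _ ↦ lipDualNorm_nonneg _
  suffices S ≤ (K * ∑ ε : ι → Bool, lipDualNorm (rademacherSum L ε)) / 2 ^ Fintype.card ι + S / 2 by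
    rw [← sub_le_iff_le_add, le_div_iff₀ (by positivity)] at this
    linarith
  refine sum_ciSup_le_of_forall_sum_le fun F ↦ ?_
  set bad : Finset (ι → Bool) :=
    {ε | ¬ LipschitzOnWith K (rademacherSum (fun i ↦ (F i).1) ε) (Set.range p)}
  have hbad : #bad * (Fintype.card ι * S) ≤ 2 ^ Fintype.card ι * (S / 2) := by
    calc #bad * (Fintype.card ι * S)
        ≤ Fintype.card σ ^ 2 * (2 ^ Fintype.card ι *
            Real.exp (-(K ^ 2 / (2 * Fintype.card ι)))) * (Fintype.card ι * S) := by
          gcongr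
          exact card_not_lipschitzOnWith_rademacherSum_le p (fun i ↦ (F i).2) K
      _ = Fintype.card σ ^ 2 * Fintype.card ι * Real.exp (-(K ^ 2 / (2 * Fintype.card ι))) *
            (2 ^ Fintype.card ι * S) := by ring
      _ ≤ 1 / 2 * (2 ^ Fintype.card ι * S) := by gcongr
      _ = _ := by ring
  have hsum := two_pow_mul_sum_apply_le hL hp (fun i ↦ (F i).2) hK
  rw [div_add' _ _ _ (by positivity), le_div_iff₀ (by positivity)]
  linarith

theorem one_div_sqrt_mul_sum_lipDualNorm_le (p : σ → E) (hL : ∀ i, LipBounded (L i))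
    (hp : ∀ i, DependsOn ⇑(L i) (Set.range p)) (hσ : 2 * Fintype.card ι ≤ Fintype.card σ) :
    (1 / √(28 * Fintype.card ι * Real.log (Fintype.card σ))) * ∑ i, lipDualNorm (L i)
      ≤ (1 / 2 ^ Fintype.card ι : ℝ) * ∑ ε : ι → Bool, lipDualNorm (rademacherSum L ε) := by
  have hmN : (2 : ℝ) * Fintype.card ι ≤ Fintype.card σ := by exact_mod_cast hσ
  set m := (Fintype.card ι : ℝ)
  set N := (Fintype.card σ : ℝ)
  have hm : 1 ≤ m := Nat.one_le_cast.mpr Fintype.card_pos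
  have hlog : 0 < Real.log N := Real.log_pos (by linarith)
  let K : ℝ≥0 := ⟨√(7 * m * Real.log N), Real.sqrt_nonneg _⟩
  have hK : 0 < (K : ℝ) := Real.sqrt_pos.mpr (by positivity)
  have hKsq : (K : ℝ) ^ 2 = 7 * m * Real.log N := Real.sq_sqrt (by positivity)
  have hsqrt : √(28 * m * Real.log N) = 2 * K := by
    rw [Real.sqrt_eq_iff_mul_self_eq (by positivity) (by positivity)]
    linarith
  have h := sum_lipDualNorm_le p hL hp hK
    (sq_mul_mul_exp_neg_le_half (by positivity) (by linarith) hmN hKsq)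
  rwa [hsqrt, one_div_mul_eq_div, one_div_mul_eq_div,
    div_le_div_iff₀ (by positivity) (by positivity), mul_comm, mul_comm (Finset.sum _ _)]

end Comparison

section DifferenceSum

variable {E κ : Type*} [Fintype κ]

/-- The linear functional `f ↦ ∑ j, (f (x j) - f (y j))`, one block of the signed sum. -/
noncomputable def differenceSum (x y : κ → E) : Module.Dual ℝ (E → ℝ) :=
  ∑ j, (LinearMap.proj (φ := fun _ ↦ ℝ) (x j) - LinearMap.proj (R := ℝ) (y j))

lemma differenceSum_apply (x y : κ → E) (f : E → ℝ) :
    differenceSum x y f = ∑ j, (f (x j) - f (y j)) := by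
  simp [differenceSum]

lemma dependsOn_differenceSum {x y : κ → E} {s : Set E} (hx : ∀ j, x j ∈ s) (hy : ∀ j, y j ∈ s) :
    DependsOn ⇑(differenceSum x y) s := fun f g hfg ↦ by
  simp only [differenceSum_apply, hfg _ (hx _), hfg _ (hy _)]

lemma lipBounded_differenceSum [PseudoMetricSpace E] (x y : κ → E) :
    LipBounded (differenceSum x y) := by
  refine ⟨∑ j, dist (x j) (y j), Set.forall_mem_range.mpr fun f ↦ ?_⟩
  rw [differenceSum_apply]
  refine Finset.sum_le_sum fun j _ ↦ (le_abs_self _).trans ?_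
  simpa [Real.dist_eq] using f.2.dist_le_mul (x j) (y j)

end DifferenceSum

theorem stmt_17_general {E ι κ : Type*} [PseudoMetricSpace E] [Fintype ι] [DecidableEq ι]
    [Nonempty ι] [Fintype κ] [Nonempty κ] (x y : ι → κ → E) :
    (1 / √(28 * Fintype.card ι * Real.log (2 * Fintype.card ι * Fintype.card κ))) *
        ∑ i, ⨆ f : {f : E → ℝ // LipschitzWith 1 f}, ∑ j, (f.1 (x i j) - f.1 (y i j))
      ≤ (1 / 2 ^ Fintype.card ι : ℝ) *
          ∑ ε : ι → Bool, ⨆ f : {f : E → ℝ // LipschitzWith 1 f},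
            ∑ i, (if ε i then (1 : ℝ) else -1) * ∑ j, (f.1 (x i j) - f.1 (y i j)) := by
  let points : (ι × κ) ⊕ (ι × κ) → E := Sum.elim (fun a ↦ x a.1 a.2) (fun a ↦ y a.1 a.2)
  have hcard : Fintype.card ((ι × κ) ⊕ (ι × κ)) = 2 * Fintype.card ι * Fintype.card κ := by
    rw [Fintype.card_sum, Fintype.card_prod]
    ring
  have h := one_div_sqrt_mul_sum_lipDualNorm_le (L := fun i ↦ differenceSum (x i) (y i)) points
    (fun i ↦ lipBounded_differenceSum _ _)
    (fun i ↦ dependsOn_differenceSum (fun j ↦ ⟨.inl (i, j), rfl⟩) fun j ↦ ⟨.inr (i, j), rfl⟩)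
    (hcard ▸ Nat.le_mul_of_pos_right _ Fintype.card_pos)
  simpa only [hcard, Nat.cast_mul, Nat.cast_ofNat, lipDualNorm, rademacherSum_dual_apply,
    differenceSum_apply, rademacherSign] using h

/-- **Lemma (w1prelb).** Let `(E, d_E)` be a metric space and `x_{i,j}, y_{i,j} ∈ E`
for `1 ≤ i ≤ m`, `1 ≤ j ≤ n`. Let `s₁, …, s_m` be independent Rademacher random
variables (modeled by averaging over all sign patterns `ε : Fin m → Bool`, with
`s_i = 1` if `ε i` and `s_i = −1` otherwise). Then
`𝔼 sup_{‖f‖_Lip ≤ 1} ∑_i s_i ∑_j (f(x_{i,j}) − f(y_{i,j}))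
  ≥ (1/√(28 m ln(2mn))) ∑_i sup_{‖f‖_Lip ≤ 1} ∑_j (f(x_{i,j}) − f(y_{i,j}))`,
the suprema being over all `f : E → ℝ` with Lipschitz constant at most `1`. -/
theorem stmt_17 {E : Type*} [MetricSpace E] (m n : ℕ) (hm : 1 ≤ m) (hn : 1 ≤ n)
    (x y : Fin m → Fin n → E) :
    (1 / Real.sqrt (28 * m * Real.log (2 * m * n))) *
        ∑ i : Fin m,
          ⨆ f : {f : E → ℝ // LipschitzWith 1 f},
            ∑ j : Fin n, (f.1 (x i j) - f.1 (y i j))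
      ≤ (1 / 2 ^ m : ℝ) *
          ∑ ε : Fin m → Bool,
            ⨆ f : {f : E → ℝ // LipschitzWith 1 f},
              ∑ i : Fin m, (if ε i then (1 : ℝ) else -1) *
                ∑ j : Fin n, (f.1 (x i j) - f.1 (y i j)) := by
  have : Nonempty (Fin m) := ⟨⟨0, hm⟩⟩
  have : Nonempty (Fin n) := ⟨⟨0, hn⟩⟩
  simpa only [Fintype.card_fin] using stmt_17_general x y
end

section
/- Let (E,d_E) be a separable metric space and let μ ∈ 𝒫_1(E). Then for all m, n ∈ ℕ, 𝔼[W_1(μ_{mn}, μ)] ≥ (1/(11·√(m·ln(2mn)))) · 𝔼[W_1(μ_n, μ)], where μ_k denotes the empirical measure of μ with sample size k. -/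
open MeasureTheory ENNReal Filter

noncomputable section

/-- The `p`-Wasserstein distance between two measures on a metric space, as an
extended nonnegative real: the infimum over all couplings `γ` (measures on `E × E`
with the prescribed marginals) of `(∫ d(x,y)^p dγ)^(1/p)`. -/
def Wp {E : Type*} [MetricSpace E] [MeasurableSpace E] (p : ℝ) (μ ν : Measure E) : ℝ≥0∞ :=
  ⨅ γ ∈ {γ : Measure (E × E) | γ.map Prod.fst = μ ∧ γ.map Prod.snd = ν},
    (∫⁻ z, edist z.1 z.2 ^ p ∂γ) ^ (1 / p)

/-- The (uniform) discrete measure `(1/n) ∑ δ_{X i}`. -/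
def empiricalMeasure {E : Type*} [MeasurableSpace E] (n : ℕ) (X : Fin n → E) : Measure E :=
  (n : ℝ≥0∞)⁻¹ • ∑ i, Measure.dirac (X i)

/-- The law of `n` independent samples of `μ`. -/
def sampleMeasure {E : Type*} [MeasurableSpace E] (μ : Measure E) (n : ℕ) :
    Measure (Fin n → E) :=
  Measure.pi fun _ => μ

/-- `𝔼[W_p(μ_n, μ)]`, where `μ_n` is the empirical measure of `μ` with sample size `n`. -/
def expWp {E : Type*} [MetricSpace E] [MeasurableSpace E] (p : ℝ) (μ : Measure E) (n : ℕ) :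
    ℝ≥0∞ :=
  ∫⁻ X, Wp p (empiricalMeasure n X) μ ∂(sampleMeasure μ n)

/-- `(𝔼[W_p(μ_n, μ)^p])^{1/p}`, where `μ_n` is the empirical measure of `μ` with
sample size `n`. -/
def expWpPow {E : Type*} [MetricSpace E] [MeasurableSpace E] (p : ℝ) (μ : Measure E) (n : ℕ) :
    ℝ≥0∞ :=
  (∫⁻ X, (Wp p (empiricalMeasure n X) μ) ^ p ∂(sampleMeasure μ n)) ^ (1 / p)

/-- The optimal uniform quantization error
`b_{n,p}(μ) = inf_{x₁,…,x_n} W_p(μ, (1/n) ∑ δ_{x_i})`. -/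
def unifQuantErr {E : Type*} [MetricSpace E] [MeasurableSpace E] (p : ℝ) (n : ℕ)
    (μ : Measure E) : ℝ≥0∞ :=
  ⨅ x : Fin n → E, Wp p μ (empiricalMeasure n x)

/-- The optimal quantization error `e_{n,p}(μ)`: the infimum of `W_p(μ, ν)` over all
probability measures `ν` supported on at most `n` points. -/
def quantErr {E : Type*} [MetricSpace E] [MeasurableSpace E] (p : ℝ) (n : ℕ)
    (μ : Measure E) : ℝ≥0∞ :=
  ⨅ ν ∈ {ν : Measure E | IsProbabilityMeasure ν ∧
      ∃ S : Finset E, S.card ≤ n ∧ ν (↑S : Set E)ᶜ = 0}, Wp p μ ν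

/-- `μ` has a finite `p`-th moment: `∫ d(x, x₀)^p dμ(x) < ∞` for some `x₀`. -/
def HasFiniteMoment {E : Type*} [MetricSpace E] [MeasurableSpace E] (p : ℝ)
    (μ : Measure E) : Prop :=
  ∃ x₀ : E, ∫⁻ x, edist x x₀ ^ p ∂μ ≠ ∞

end

/-
Let `c(X, Y)` be the cost of an optimal matching of two samples of the same size. Coupling shows
`n 𝔼 W₁(μ_n, μ) ≤ 𝔼 c(X, Y)` and the triangle inequality gives `𝔼 c(X, Y) ≤ 2 n 𝔼 W₁(μ_n, μ)` for
independent samples `X, Y` of size `n`, so it suffices to compare `𝔼 c` for sizes `n` and `m n`.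

Split two samples of size `m n` into `m` pairs of blocks and let `f_b` be a `1`-Lipschitz dual
optimizer for the `b`-th pair. Swapping the samples in each pair according to independent signs
`ε_b = ± 1` does not change their law. Test the swapped samples against the function
`G = ∑ l, ε_l f_l`: in expectation only the diagonal terms `ε_b² = 1` survive, and they add up to
the sum of the matching costs of the blocks. On the other hand, by Hoeffding's inequality and a
union bound over the pairs of sample points, with high probability `G` is
`O(√(m log(2mn)))`-Lipschitz on the `2 m n` sample points.
-/

open ProbabilityTheory

section Assignment

variable {ι : Type*} [Fintype ι]

/-- The cost of the transport plan `M` for the cost matrix `c`, as a linear function of `M`. -/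
noncomputable def transportCost (c : Matrix ι ι ℝ) : Matrix ι ι ℝ →ₗ[ℝ] ℝ :=
  ∑ i, ∑ j, c i j • Matrix.entryLinearMap ℝ ℝ i j

theorem transportCost_apply (c M : Matrix ι ι ℝ) :
    transportCost c M = ∑ i, ∑ j, c i j * M i j := by
  simp [transportCost]

/-- The nonnegative flows on the complete directed graph on `ι` that send one unit of mass from
`i` to `k`. For `i = k` these are the nonnegative circulations. -/
def unitFlows [DecidableEq ι] (i k : ι) : Set (Matrix ι ι ℝ) :=
  {M | (∀ x y, 0 ≤ M x y) ∧
    ∀ x, ∑ y, M x y - ∑ y, M y x = (Pi.single i 1 - Pi.single k 1 : ι → ℝ) x}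

variable [DecidableEq ι]

theorem transportCost_permMatrix (c : Matrix ι ι ℝ) (σ : Equiv.Perm ι) :
    transportCost c (σ.permMatrix ℝ) = ∑ i, c i (σ i) := by
  simp [transportCost_apply, Equiv.Perm.permMatrix, PEquiv.toMatrix_apply]

theorem transportCost_single (c : Matrix ι ι ℝ) (i j : ι) (a : ℝ) :
    transportCost c (Matrix.single i j a) = c i j * a := by
  simp [transportCost_apply, Matrix.single_apply, ite_and]

theorem transportCost_diagonal {c : Matrix ι ι ℝ} (hc : ∀ i, c i i = 0) (d : ι → ℝ) :
    transportCost c (Matrix.diagonal d) = 0 := by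
  simp [transportCost_apply, Matrix.diagonal_apply, hc]

theorem le_transportCost_of_mem_doublyStochastic {c : Matrix ι ι ℝ} {b : ℝ}
    (h : ∀ σ : Equiv.Perm ι, b ≤ ∑ i, c i (σ i)) {M : Matrix ι ι ℝ}
    (hM : M ∈ doublyStochastic ℝ ι) : b ≤ transportCost c M := by
  rw [← SetLike.mem_coe, doublyStochastic_eq_convexHull_permMatrix] at hM
  refine convexHull_min ?_ (convex_halfSpace_ge (transportCost c).isLinear b) hM
  rintro _ ⟨σ, rfl⟩
  simpa only [Set.mem_ofPred_eq, transportCost_permMatrix] using h σ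

theorem single_mem_unitFlows (i k : ι) : Matrix.single i k 1 ∈ unitFlows i k := by
  refine ⟨fun x y ↦ ?_, fun x ↦ ?_⟩
  · rw [Matrix.single_apply]
    split_ifs <;> norm_num
  · simp [Matrix.single_apply, ite_and, Pi.single_apply, eq_comm]

theorem add_mem_unitFlows {i j k : ι} {M N : Matrix ι ι ℝ} (hM : M ∈ unitFlows i j)
    (hN : N ∈ unitFlows j k) : M + N ∈ unitFlows i k := by
  refine ⟨fun x y ↦ add_nonneg (hM.1 x y) (hN.1 x y), fun x ↦ ?_⟩
  simp only [Matrix.add_apply, Finset.sum_add_distrib]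
  have hM_div := hM.2 x
  have hN_div := hN.2 x
  simp only [Pi.sub_apply] at hM_div hN_div ⊢
  linarith

-- Filling up the diagonal makes a multiple of a circulation doubly stochastic.
theorem transportCost_nonneg_of_mem_unitFlows_self {c : Matrix ι ι ℝ} (hc : ∀ i, c i i = 0)
    (h : ∀ σ : Equiv.Perm ι, 0 ≤ ∑ i, c i (σ i)) {i : ι} {M : Matrix ι ι ℝ}
    (hM : M ∈ unitFlows i i) : 0 ≤ transportCost c M := by
  obtain ⟨hM_nonneg, hM_div⟩ := hM
  have hrow_col (x : ι) : ∑ y, M y x = ∑ y, M x y := by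
    have hx := hM_div x
    rw [sub_self, Pi.zero_apply] at hx
    linarith
  set t : ℝ := 1 + ∑ x, ∑ y, M x y
  have hrow (x : ι) : ∑ y, M x y ≤ t :=
    (Finset.single_le_sum (f := fun x ↦ ∑ y, M x y)
      (fun x _ ↦ Finset.sum_nonneg fun y _ ↦ hM_nonneg x y) (Finset.mem_univ x)).trans
      (le_add_of_nonneg_left zero_le_one)
  have ht : 0 < t :=
    add_pos_of_pos_of_nonneg one_pos
      (Finset.sum_nonneg fun x _ ↦ Finset.sum_nonneg fun y _ ↦ hM_nonneg x y)
  have hD : t⁻¹ • (M + Matrix.diagonal fun x ↦ t - ∑ y, M x y) ∈ doublyStochastic ℝ ι := by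
    refine mem_doublyStochastic_iff_sum.2 ⟨fun x y ↦ ?_, fun x ↦ ?_, fun x ↦ ?_⟩
    · refine mul_nonneg (inv_nonneg.2 ht.le) (add_nonneg (hM_nonneg x y) ?_)
      rw [Matrix.diagonal_apply]
      split_ifs
      exacts [sub_nonneg.2 (hrow x), le_rfl]
    · simp [← Finset.mul_sum, Finset.sum_add_distrib, Matrix.diagonal_apply, ht.ne']
    · simp [← Finset.mul_sum, Finset.sum_add_distrib, Matrix.diagonal_apply, hrow_col, ht.ne']
  have hcost := le_transportCost_of_mem_doublyStochastic h hD
  rw [map_smul, map_add, transportCost_diagonal hc, add_zero, smul_eq_mul] at hcost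
  exact nonneg_of_mul_nonneg_right hcost (inv_pos.2 ht)

end Assignment

-- The potential of `i` is the cost of the cheapest unit flow from `i` to a fixed base point.
theorem exists_potential_of_forall_perm_nonneg {ι : Type*} [Fintype ι] {c : Matrix ι ι ℝ}
    (hc : ∀ i, c i i = 0) (h : ∀ σ : Equiv.Perm ι, 0 ≤ ∑ i, c i (σ i)) :
    ∃ v : ι → ℝ, ∀ i k, v i ≤ v k + c i k := by
  classical
  cases isEmpty_or_nonempty ι with
  | inl _ => exact ⟨0, isEmptyElim⟩
  | inr _ =>
    obtain ⟨i₀⟩ := ‹Nonempty ι›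
    have (i : ι) : Nonempty (unitFlows i i₀) := ⟨⟨_, single_mem_unitFlows i i₀⟩⟩
    have hbdd (i : ι) : BddBelow (Set.range fun M : unitFlows i i₀ ↦ transportCost c M) := by
      refine ⟨-c i₀ i, Set.forall_mem_range.2 fun M ↦ ?_⟩
      have hcirc := transportCost_nonneg_of_mem_unitFlows_self hc h
        (add_mem_unitFlows (single_mem_unitFlows i₀ i) M.2)
      rw [map_add, transportCost_single] at hcirc
      linarith
    refine ⟨fun i ↦ ⨅ M : unitFlows i i₀, transportCost c M, fun i k ↦ ?_⟩
    rw [← sub_le_iff_le_add]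
    refine le_ciInf fun M ↦ sub_le_iff_le_add.2 ?_
    refine (ciInf_le (hbdd i) ⟨_, add_mem_unitFlows (single_mem_unitFlows i k) M.2⟩).trans_eq ?_
    rw [map_add, transportCost_single, mul_one, add_comm]

theorem sum_sub_comp_perm {ι E : Type*} [Fintype ι] (f : E → ℝ) (X Y : ι → E)
    (σ : Equiv.Perm ι) : ∑ i, (f (X i) - f (Y (σ i))) = ∑ i, (f (X i) - f (Y i)) := by
  simp only [Finset.sum_sub_distrib, Equiv.sum_comp σ fun i ↦ f (Y i)]

section MatchingCost

variable {ι E : Type*} [Fintype ι] [PseudoMetricSpace E]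

/-- The cost of an optimal matching of the point families `X` and `Y`. For `n` points this is `n`
times the `1`-Wasserstein distance of the two empirical measures. -/
noncomputable def matchingCost (X Y : ι → E) : ℝ :=
  ⨅ σ : Equiv.Perm ι, ∑ i, dist (X i) (Y (σ i))

theorem matchingCost_le (X Y : ι → E) (σ : Equiv.Perm ι) :
    matchingCost X Y ≤ ∑ i, dist (X i) (Y (σ i)) :=
  ciInf_le (Set.finite_range _).bddBelow σ

theorem exists_perm_sum_dist_eq_matchingCost (X Y : ι → E) :
    ∃ σ : Equiv.Perm ι, ∑ i, dist (X i) (Y (σ i)) = matchingCost X Y :=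
  exists_eq_ciInf_of_finite

theorem matchingCost_nonneg (X Y : ι → E) : 0 ≤ matchingCost X Y :=
  Real.iInf_nonneg fun _ ↦ Finset.sum_nonneg fun _ _ ↦ dist_nonneg

theorem matchingCost_comp_equiv {κ : Type*} [Fintype κ] (e : κ ≃ ι) (X Y : ι → E) :
    matchingCost (X ∘ e) (Y ∘ e) = matchingCost X Y := by
  refine e.permCongr.iInf_congr fun σ ↦ ?_
  rw [← e.sum_comp]
  simp

theorem abs_sum_sub_le_matchingCost {K : NNReal} {f : E → ℝ} {X Y : ι → E}
    (hf : LipschitzOnWith K f (Set.range X ∪ Set.range Y)) :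
    |∑ i, (f (X i) - f (Y i))| ≤ K * matchingCost X Y := by
  obtain ⟨σ, hσ⟩ := exists_perm_sum_dist_eq_matchingCost X Y
  rw [← hσ, ← sum_sub_comp_perm f X Y σ, Finset.mul_sum]
  refine (Finset.abs_sum_le_sum_abs _ _).trans (Finset.sum_le_sum fun i _ ↦ ?_)
  exact hf.dist_le_mul _ (.inl ⟨i, rfl⟩) _ (.inr ⟨σ i, rfl⟩)

theorem exists_perm_potential (X Y : ι → E) :
    ∃ (σ : Equiv.Perm ι) (v : ι → ℝ), ∑ i, dist (X i) (Y (σ i)) = matchingCost X Y ∧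
      ∀ i k, v i + dist (X i) (Y (σ i)) ≤ v k + dist (X i) (Y (σ k)) := by
  classical
  obtain ⟨σ, hσ⟩ := exists_perm_sum_dist_eq_matchingCost X Y
  obtain ⟨v, hv⟩ := exists_potential_of_forall_perm_nonneg
    (c := fun i k ↦ dist (X i) (Y (σ k)) - dist (X i) (Y (σ i))) (fun _ ↦ sub_self _)
    fun τ ↦ by simpa [hσ] using matchingCost_le X Y (τ.trans σ)
  exact ⟨σ, v, hσ, fun i k ↦ by linarith [hv i k]⟩

theorem lipschitzWith_ciInf_add_dist {ι : Type*} [Finite ι] [Nonempty ι] (v : ι → ℝ) (Y : ι → E) :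
    LipschitzWith 1 fun z ↦ ⨅ k, (v k + dist z (Y k)) := by
  refine LipschitzWith.of_le_add fun x y ↦ ?_
  rw [← sub_le_iff_le_add]
  refine le_ciInf fun k ↦ sub_le_iff_le_add.2 ?_
  refine (ciInf_le (Set.finite_range _).bddBelow k).trans ?_
  linarith [dist_triangle x y (Y k)]

theorem exists_lipschitzWith_sum_sub_eq_matchingCost (X Y : ι → E) :
    ∃ f : E → ℝ, LipschitzWith 1 f ∧ ∑ i, (f (X i) - f (Y i)) = matchingCost X Y := by
  cases isEmpty_or_nonempty ι with
  | inl _ => exact ⟨0, .const' 0, by simp [matchingCost]⟩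
  | inr _ =>
    obtain ⟨σ, v, hσ, hv⟩ := exists_perm_potential X Y
    let f : E → ℝ := fun z ↦ ⨅ k, (v k + dist z (Y (σ k)))
    have hf : LipschitzWith 1 f := lipschitzWith_ciInf_add_dist v (Y ∘ σ)
    refine ⟨f, hf, le_antisymm ?_ ?_⟩
    · simpa using (le_abs_self _).trans (abs_sum_sub_le_matchingCost hf.lipschitzOnWith)
    · rw [← hσ, ← sum_sub_comp_perm f X Y σ]
      refine Finset.sum_le_sum fun i _ ↦ ?_
      have hX : v i + dist (X i) (Y (σ i)) ≤ f (X i) := le_ciInf (hv i)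
      have hY : f (Y (σ i)) ≤ v i :=
        (ciInf_le (Set.finite_range _).bddBelow i).trans_eq (by rw [dist_self, add_zero])
      linarith

end MatchingCost

section CoinFlips

variable {κ : Type*}

/-- The sign `± 1` encoded by a Boolean. -/
noncomputable def boolSign (b : Bool) : ℝ :=
  if b then 1 else -1

theorem boolSign_mul_self (b : Bool) : boolSign b * boolSign b = 1 := by
  cases b <;> simp [boolSign]

theorem abs_boolSign (b : Bool) : |boolSign b| = 1 := by
  cases b <;> simp [boolSign]

/-- The random function `z ↦ ∑ l, ± f l z` whose signs are encoded by `s`. -/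
noncomputable def signedSum [Fintype κ] {E : Type*} (s : κ → Bool) (f : κ → E → ℝ) (z : E) : ℝ :=
  ∑ l, boolSign (s l) * f l z

variable [Fintype κ]

/-- The law of a family of independent fair coin flips. -/
noncomputable def coinFlips (κ : Type*) [Fintype κ] : Measure (κ → Bool) :=
  Measure.pi fun _ ↦ bernoulliMeasure true false ⟨1 / 2, by norm_num⟩

instance : IsProbabilityMeasure (coinFlips κ) :=
  inferInstanceAs (IsProbabilityMeasure (Measure.pi _))

theorem integral_boolSign_eval (l : κ) : ∫ s, boolSign (s l) ∂coinFlips κ = 0 := by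
  refine (integral_comp_eval (X := fun _ ↦ Bool) (f := boolSign) .of_discrete).trans ?_
  rw [integral_bernoulliMeasure]
  norm_num [boolSign]

theorem iIndepFun_boolSign_eval :
    iIndepFun (fun (l : κ) (s : κ → Bool) ↦ boolSign (s l)) (coinFlips κ) :=
  iIndepFun_pi fun _ ↦ .of_discrete

theorem integral_boolSign_mul_boolSign [DecidableEq κ] (b l : κ) :
    ∫ s, boolSign (s b) * boolSign (s l) ∂coinFlips κ = if b = l then 1 else 0 := by
  split_ifs with h
  · simp [h, boolSign_mul_self]
  · rw [(iIndepFun_boolSign_eval.indepFun h).integral_fun_mul_eq_mul_integral .of_discrete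
      .of_discrete, integral_boolSign_eval, zero_mul]

theorem integral_sum_boolSign_mul_boolSign_mul (D : κ → κ → ℝ) :
    ∫ s, ∑ b, ∑ l, boolSign (s b) * boolSign (s l) * D b l ∂coinFlips κ = ∑ b, D b b := by
  classical
  simp_rw [integral_finsetSum _ fun _ _ ↦ Integrable.of_finite, integral_mul_const,
    integral_boolSign_mul_boolSign, ite_mul, one_mul, zero_mul, Finset.sum_ite_eq, Finset.mem_univ,
    if_true]

theorem abs_sum_boolSign_mul_boolSign_mul_le {D : κ → κ → ℝ} {c : κ → ℝ}
    (hD : ∀ b l, |D b l| ≤ c b) (s : κ → Bool) :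
    |∑ b, ∑ l, boolSign (s b) * boolSign (s l) * D b l| ≤ Fintype.card κ * ∑ b, c b := by
  rw [Finset.mul_sum]
  refine (Finset.abs_sum_le_sum_abs _ _).trans (Finset.sum_le_sum fun b _ ↦ ?_)
  refine (Finset.abs_sum_le_sum_abs _ _).trans ?_
  simpa [abs_mul, abs_boolSign] using Finset.sum_le_sum fun l (_ : l ∈ Finset.univ) ↦ hD b l

theorem hasSubgaussianMGF_boolSign_mul (l : κ) {t : ℝ} {d : NNReal} (ht : |t| ≤ d) :
    HasSubgaussianMGF (fun s ↦ boolSign (s l) * t) (d ^ 2) (coinFlips κ) := by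
  have hbound (s : κ → Bool) : boolSign (s l) * t ∈ Set.Icc (-(d : ℝ)) d := by
    rw [Set.mem_Icc, ← abs_le, abs_mul, abs_boolSign, one_mul]
    exact ht
  have hzero : ∫ s, boolSign (s l) * t ∂coinFlips κ = 0 := by
    rw [integral_mul_const, integral_boolSign_eval, zero_mul]
  have h := hasSubgaussianMGF_of_mem_Icc_of_integral_eq_zero .of_discrete (.of_forall hbound) hzero
  have hd : ‖(d : ℝ) - -d‖₊ / 2 = d := by
    rw [sub_neg_eq_add, ← two_mul, nnnorm_mul, NNReal.nnnorm_eq]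
    simp
  rwa [hd] at h

theorem measureReal_lt_sum_boolSign_mul_le {t : κ → ℝ} {d : NNReal} (ht : ∀ l, |t l| ≤ d)
    (L : NNReal) :
    (coinFlips κ).real {s | L * d < ∑ l, boolSign (s l) * t l} ≤
      Real.exp (-L ^ 2 / (2 * Fintype.card κ)) := by
  obtain rfl | hd := eq_zero_or_pos d
  · have ht0 (l : κ) : t l = 0 := abs_nonpos_iff.1 (ht l)
    simp [ht0, Real.exp_nonneg]
  have hindep : iIndepFun (fun (l : κ) (s : κ → Bool) ↦ boolSign (s l) * t l) (coinFlips κ) :=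
    iIndepFun_boolSign_eval.comp (fun l x ↦ x * t l) fun _ ↦ by fun_prop
  have hoeffding := HasSubgaussianMGF.measure_sum_ge_le_of_iIndepFun hindep (s := Finset.univ)
    (fun l _ ↦ hasSubgaussianMGF_boolSign_mul l (ht l)) (ε := L * d) (by positivity)
  refine (measureReal_mono (fun s hs ↦ (Set.mem_ofPred_eq ▸ hs).le)
    (measure_ne_top _ _)).trans (hoeffding.trans_eq ?_)
  congr 1
  have : (d : ℝ) ≠ 0 := by positivity
  simp only [Finset.sum_const, Finset.card_univ, nsmul_eq_mul]
  push_cast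
  rw [mul_pow, neg_mul_eq_neg_mul, ← mul_assoc, mul_div_mul_right _ _ (pow_ne_zero 2 this)]

theorem measureReal_not_lipschitzOnWith_signedSum_le {α E : Type*} [Fintype α]
    [PseudoMetricSpace E] {f : κ → E → ℝ} (hf : ∀ l, LipschitzWith 1 (f l)) (x : α → E)
    (L : NNReal) :
    (coinFlips κ).real {s | ¬LipschitzOnWith L (signedSum s f) (Set.range x)} ≤
      Fintype.card α ^ 2 * Real.exp (-L ^ 2 / (2 * Fintype.card κ)) := by
  let bad (p : α × α) : Set (κ → Bool) :=
    {s | L * nndist (x p.1) (x p.2) < ∑ l, boolSign (s l) * (f l (x p.1) - f l (x p.2))}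
  have hsub : {s | ¬LipschitzOnWith L (signedSum s f) (Set.range x)} ⊆ ⋃ p, bad p := by
    intro s hs
    contrapose! hs
    simp only [bad, Set.mem_iUnion, Set.mem_ofPred_eq, not_exists, not_lt, Prod.forall, coe_nndist,
      mul_sub, Finset.sum_sub_distrib] at hs
    refine not_not.2 (LipschitzOnWith.of_dist_le_mul ?_)
    rintro _ ⟨i, rfl⟩ _ ⟨j, rfl⟩
    have hji := hs j i
    rw [dist_comm] at hji
    exact abs_sub_le_iff.2 ⟨hs i j, hji⟩
  calc (coinFlips κ).real {s | ¬LipschitzOnWith L (signedSum s f) (Set.range x)}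
      ≤ ∑ p, (coinFlips κ).real (bad p) :=
        (measureReal_mono hsub).trans (measureReal_iUnion_fintype_le _)
    _ ≤ ∑ _p : α × α, Real.exp (-L ^ 2 / (2 * Fintype.card κ)) :=
        Finset.sum_le_sum fun p _ ↦
          measureReal_lt_sum_boolSign_mul_le (fun l ↦ by
            simpa [Real.dist_eq] using (hf l).dist_le_mul (x p.1) (x p.2)) L
    _ = Fintype.card α ^ 2 * Real.exp (-L ^ 2 / (2 * Fintype.card κ)) := by
        simp [sq]

end CoinFlips

section Symmetrization

/-- The family that follows `X` at the indices where `s` is true, and `Y` elsewhere. -/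
def selectBy {α E : Type*} (s : α → Bool) (X Y : α → E) (a : α) : E :=
  if s a then X a else Y a

theorem sub_selectBy {α E : Type*} (g : E → ℝ) (s : α → Bool) (X Y : α → E) (a : α) :
    g (selectBy s X Y a) - g (selectBy s Y X a) = boolSign (s a) * (g (X a) - g (Y a)) := by
  cases h : s a <;> simp [selectBy, boolSign, h]

theorem range_selectBy_subset {α E : Type*} (s : α → Bool) (X Y : α → E) :
    Set.range (selectBy s X Y) ⊆ Set.range X ∪ Set.range Y := by
  rintro _ ⟨a, rfl⟩
  cases h : s a <;> simp [selectBy, h]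

variable {κ ι E : Type*} [Fintype κ] [Fintype ι]

theorem sum_signedSum_sub_selectBy (f : κ → E → ℝ) (s : κ → Bool) (X Y : κ × ι → E) :
    ∑ a, (signedSum s f (selectBy (s ∘ Prod.fst) X Y a) -
        signedSum s f (selectBy (s ∘ Prod.fst) Y X a)) =
      ∑ b, ∑ l, boolSign (s b) * boolSign (s l) * ∑ i, (f l (X (b, i)) - f l (Y (b, i))) := by
  simp only [sub_selectBy, Fintype.sum_prod_type, signedSum, ← Finset.sum_sub_distrib, ← mul_sub,
    Function.comp_apply, Finset.mul_sum, mul_assoc]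
  refine Finset.sum_congr rfl fun b _ ↦ Finset.sum_comm.trans ?_
  simp only [mul_left_comm]

variable [PseudoMetricSpace E]

theorem sum_boolSign_mul_le_mul_matchingCost_selectBy {f : κ → E → ℝ} {X Y : κ × ι → E}
    {L : NNReal} {s : κ → Bool}
    (hf : LipschitzOnWith L (signedSum s f) (Set.range X ∪ Set.range Y)) :
    ∑ b, ∑ l, boolSign (s b) * boolSign (s l) * ∑ i, (f l (X (b, i)) - f l (Y (b, i))) ≤
      L * matchingCost (selectBy (s ∘ Prod.fst) X Y) (selectBy (s ∘ Prod.fst) Y X) := by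
  rw [← sum_signedSum_sub_selectBy]
  refine (le_abs_self _).trans (abs_sum_sub_le_matchingCost (hf.mono ?_))
  exact Set.union_subset (range_selectBy_subset _ X Y)
    ((range_selectBy_subset _ Y X).trans (Set.union_comm _ _).subset)

theorem sum_matchingCost_le_mul_integral_selectBy_add (X Y : κ × ι → E) (L : NNReal) :
    ∑ b, matchingCost (fun i ↦ X (b, i)) (fun i ↦ Y (b, i)) ≤
      L * ∫ s, matchingCost (selectBy (s ∘ Prod.fst) X Y) (selectBy (s ∘ Prod.fst) Y X)
          ∂coinFlips κ +
        (2 * Fintype.card (κ × ι)) ^ 2 * Real.exp (-L ^ 2 / (2 * Fintype.card κ)) *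
          (Fintype.card κ * ∑ b, matchingCost (fun i ↦ X (b, i)) (fun i ↦ Y (b, i))) := by
  choose f hf hf_sum using fun b ↦
    exists_lipschitzWith_sum_sub_eq_matchingCost (fun i ↦ X (b, i)) (fun i ↦ Y (b, i))
  set C := ∑ b, matchingCost (fun i ↦ X (b, i)) (fun i ↦ Y (b, i))
  let D (b l : κ) : ℝ := ∑ i, (f l (X (b, i)) - f l (Y (b, i)))
  let U (s : κ → Bool) : ℝ := ∑ b, ∑ l, boolSign (s b) * boolSign (s l) * D b l
  let cost (s : κ → Bool) : ℝ :=
    matchingCost (selectBy (s ∘ Prod.fst) X Y) (selectBy (s ∘ Prod.fst) Y X)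
  let bad : Set (κ → Bool) :=
    {s | ¬LipschitzOnWith L (signedSum s f) (Set.range (Sum.elim X Y))}
  have hU_abs (s : κ → Bool) : |U s| ≤ Fintype.card κ * C :=
    abs_sum_boolSign_mul_boolSign_mul_le (fun b l ↦ by
      simpa only [NNReal.coe_one, one_mul] using
        abs_sum_sub_le_matchingCost (hf l).lipschitzOnWith) s
  have hU (s : κ → Bool) : U s ≤ L * cost s + bad.indicator (fun _ ↦ Fintype.card κ * C) s := by
    by_cases hs : s ∈ bad
    · rw [Set.indicator_of_mem hs]
      exact (le_abs_self _).trans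
        ((hU_abs s).trans (le_add_of_nonneg_left (mul_nonneg L.2 (matchingCost_nonneg _ _))))
    · rw [Set.indicator_of_notMem hs, add_zero]
      rw [Set.mem_ofPred_eq, not_not, Set.Sum.elim_range] at hs
      exact sum_boolSign_mul_le_mul_matchingCost_selectBy hs
  have hbad : (coinFlips κ).real bad ≤
      (2 * Fintype.card (κ × ι)) ^ 2 * Real.exp (-L ^ 2 / (2 * Fintype.card κ)) := by
    simpa [-Set.Sum.elim_range, ← two_mul] using
      measureReal_not_lipschitzOnWith_signedSum_le hf (Sum.elim X Y) L
  have hC : 0 ≤ C := Finset.sum_nonneg fun b _ ↦ matchingCost_nonneg _ _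
  calc C = ∫ s, U s ∂coinFlips κ := by
        rw [integral_sum_boolSign_mul_boolSign_mul D]
        exact Finset.sum_congr rfl fun b _ ↦ (hf_sum b).symm
    _ ≤ ∫ s, (L * cost s + bad.indicator (fun _ ↦ Fintype.card κ * C) s) ∂coinFlips κ :=
        integral_mono .of_finite .of_finite hU
    _ = L * ∫ s, cost s ∂coinFlips κ + (coinFlips κ).real bad * (Fintype.card κ * C) := by
        rw [integral_add .of_finite .of_finite, integral_const_mul,
          integral_indicator_const _ .of_discrete, smul_eq_mul]
    _ ≤ _ := by gcongr

theorem mul_exp_neg_sqrt_sq_le {m n : ℝ} (hm : 1 ≤ m) (hn : 1 ≤ n) :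
    (2 * (m * n)) ^ 2 * Real.exp (-√(8 * (m * Real.log (2 * m * n))) ^ 2 / (2 * m)) * m ≤
      1 / 4 := by
  have hmn : 1 ≤ m * n := one_le_mul_of_one_le_of_one_le hm hn
  have hlog : 0 ≤ Real.log (2 * m * n) := Real.log_nonneg (by linarith)
  have hexp : Real.exp (-√(8 * (m * Real.log (2 * m * n))) ^ 2 / (2 * m)) =
      ((2 * m * n) ^ 4)⁻¹ := by
    rw [Real.sq_sqrt (by positivity), ← Real.exp_log (by positivity : 0 < (2 * m * n) ^ 4),
      ← Real.exp_neg, Real.log_pow]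
    congr 1
    field_simp
    push_cast
    ring
  rw [hexp]
  have : 0 < m * n := by positivity
  field_simp
  nlinarith

theorem sum_matchingCost_le_mul_integral_selectBy [Nonempty κ] [Nonempty ι] (X Y : κ × ι → E) :
    ∑ b, matchingCost (fun i ↦ X (b, i)) (fun i ↦ Y (b, i)) ≤
      4 * √(Fintype.card κ * Real.log (2 * Fintype.card κ * Fintype.card ι)) *
        ∫ s, matchingCost (selectBy (s ∘ Prod.fst) X Y) (selectBy (s ∘ Prod.fst) Y X)
          ∂coinFlips κ := by
  set C := ∑ b, matchingCost (fun i ↦ X (b, i)) (fun i ↦ Y (b, i))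
  set I := ∫ s, matchingCost (selectBy (s ∘ Prod.fst) X Y) (selectBy (s ∘ Prod.fst) Y X)
    ∂coinFlips κ
  set a : ℝ := Fintype.card κ * Real.log (2 * Fintype.card κ * Fintype.card ι)
  have hC : 0 ≤ C := Finset.sum_nonneg fun b _ ↦ matchingCost_nonneg _ _
  have hI : 0 ≤ I := integral_nonneg fun s ↦ matchingCost_nonneg _ _
  have hsmall := mul_exp_neg_sqrt_sq_le (m := Fintype.card κ) (n := Fintype.card ι)
    (Nat.one_le_cast.2 Fintype.card_pos) (Nat.one_le_cast.2 Fintype.card_pos)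
  have hcost := sum_matchingCost_le_mul_integral_selectBy_add X Y
    (NNReal.mk √(8 * a) (Real.sqrt_nonneg _))
  rw [Fintype.card_prod, Nat.cast_mul, NNReal.coe_mk] at hcost
  have hthree_fourths : 3 / 4 * C ≤ √(8 * a) * I := by
    linarith [mul_le_mul_of_nonneg_right hsmall hC]
  have hsqrt : √(8 * a) ≤ 3 * √a := by
    rw [Real.sqrt_mul (by norm_num)]
    gcongr
    exact Real.sqrt_le_iff.2 (by norm_num)
  linarith [mul_le_mul_of_nonneg_right hsqrt hI]

theorem sum_ofReal_matchingCost_le_mul_lintegral_selectBy [Nonempty κ] [Nonempty ι]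
    (X Y : κ × ι → E) :
    ∑ b, ENNReal.ofReal (matchingCost (fun i ↦ X (b, i)) (fun i ↦ Y (b, i))) ≤
      ENNReal.ofReal (4 * √(Fintype.card κ * Real.log (2 * Fintype.card κ * Fintype.card ι))) *
        ∫⁻ s, ENNReal.ofReal
          (matchingCost (selectBy (s ∘ Prod.fst) X Y) (selectBy (s ∘ Prod.fst) Y X))
          ∂coinFlips κ := by
  rw [← ENNReal.ofReal_sum_of_nonneg fun b _ ↦ matchingCost_nonneg _ _,
    ← ofReal_integral_eq_lintegral_ofReal .of_finite (.of_forall fun s ↦ matchingCost_nonneg _ _),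
    ← ENNReal.ofReal_mul (by positivity)]
  exact ENNReal.ofReal_le_ofReal (sum_matchingCost_le_mul_integral_selectBy X Y)

end Symmetrization

section ExpectedMatchingCost

variable {α ι κ E : Type*} [Fintype α] [Fintype ι] [Fintype κ] [MeasurableSpace E]

theorem measurePreserving_pi_comp_of_injective (μ : Measure E) [IsProbabilityMeasure μ]
    {e : ι → α} (he : Function.Injective e) :
    MeasurePreserving (fun X : α → E ↦ X ∘ e) (Measure.pi fun _ ↦ μ) (Measure.pi fun _ ↦ μ) := by
  have heval (i : ι) : MeasurePreserving (Function.eval (e i)) (Measure.pi fun _ : α ↦ μ) μ :=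
    measurePreserving_eval _ (e i)
  have hindep : iIndepFun (fun (i : ι) (X : α → E) ↦ X (e i)) (Measure.pi fun _ ↦ μ) :=
    (iIndepFun_pi (X := fun _ x ↦ x) fun _ ↦ aemeasurable_id).precomp he
  refine ⟨by fun_prop, ?_⟩
  refine ((iIndepFun_iff_map_fun_eq_pi_map fun i ↦ (heval i).aemeasurable).1 hindep).trans ?_
  exact congrArg Measure.pi (funext fun i ↦ (heval i).map_eq)

theorem measurePreserving_selectBy (μ : Measure E) [SigmaFinite μ] (s : α → Bool) :
    MeasurePreserving
      (fun z : (α → E) × (α → E) ↦ (selectBy s z.1 z.2, selectBy s z.2 z.1))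
      ((Measure.pi fun _ ↦ μ).prod (Measure.pi fun _ ↦ μ))
      ((Measure.pi fun _ ↦ μ).prod (Measure.pi fun _ ↦ μ)) := by
  have hequiv := measurePreserving_arrowProdEquivProdArrow E E α (fun _ ↦ μ) (fun _ ↦ μ)
  have hswap : MeasurePreserving (fun (p : α → E × E) a ↦ if s a then p a else (p a).swap)
      (Measure.pi fun _ ↦ μ.prod μ) (Measure.pi fun _ ↦ μ.prod μ) := by
    refine measurePreserving_pi (fun _ ↦ μ.prod μ) (fun _ ↦ μ.prod μ)
      (f := fun a p ↦ if s a then p else p.swap) fun a ↦ ?_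
    cases s a
    exacts [Measure.measurePreserving_swap, .id _]
  convert hequiv.comp (hswap.comp hequiv.symm) using 1
  ext z a <;> cases h : s a <;> simp [selectBy, h, MeasurableEquiv.arrowProdEquivProdArrow,
    Equiv.arrowProdEquivProdArrow]

variable [PseudoMetricSpace E]

/-- The expected cost of an optimal matching of two independent samples of `μ`, both indexed
by `ι`. -/
noncomputable def expMatchingCost (ι : Type*) [Fintype ι] (μ : Measure E) : ℝ≥0∞ :=
  ∫⁻ z : (ι → E) × (ι → E), ENNReal.ofReal (matchingCost z.1 z.2)
    ∂(Measure.pi fun _ ↦ μ).prod (Measure.pi fun _ ↦ μ)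

variable [SecondCountableTopology E] [OpensMeasurableSpace E]

theorem measurable_matchingCost {Ω : Type*} [MeasurableSpace Ω] {X Y : Ω → ι → E}
    (hX : Measurable X) (hY : Measurable Y) : Measurable fun ω ↦ matchingCost (X ω) (Y ω) := by
  unfold matchingCost
  fun_prop

variable (μ : Measure E) [IsProbabilityMeasure μ]

theorem lintegral_matchingCost_comp_of_injective {e : ι → α} (he : Function.Injective e) :
    ∫⁻ z : (α → E) × (α → E), ENNReal.ofReal (matchingCost (z.1 ∘ e) (z.2 ∘ e))
      ∂(Measure.pi fun _ ↦ μ).prod (Measure.pi fun _ ↦ μ) = expMatchingCost ι μ :=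
  have hcomp := measurePreserving_pi_comp_of_injective μ he
  (hcomp.prod hcomp).lintegral_comp
    (measurable_matchingCost measurable_fst measurable_snd).ennreal_ofReal

theorem expMatchingCost_congr (e : ι ≃ α) : expMatchingCost ι μ = expMatchingCost α μ := by
  simp_rw [← lintegral_matchingCost_comp_of_injective μ e.injective, matchingCost_comp_equiv,
    expMatchingCost]

theorem lintegral_matchingCost_selectBy (s : α → Bool) :
    ∫⁻ z : (α → E) × (α → E),
        ENNReal.ofReal (matchingCost (selectBy s z.1 z.2) (selectBy s z.2 z.1))
      ∂(Measure.pi fun _ ↦ μ).prod (Measure.pi fun _ ↦ μ) = expMatchingCost α μ :=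
  (measurePreserving_selectBy μ s).lintegral_comp
    (measurable_matchingCost measurable_fst measurable_snd).ennreal_ofReal

theorem card_mul_expMatchingCost_le [Nonempty κ] [Nonempty ι] :
    Fintype.card κ * expMatchingCost ι μ ≤
      ENNReal.ofReal (4 * √(Fintype.card κ * Real.log (2 * Fintype.card κ * Fintype.card ι))) *
        expMatchingCost (κ × ι) μ := by
  set P : Measure ((κ × ι → E) × (κ × ι → E)) :=
    (Measure.pi fun _ ↦ μ).prod (Measure.pi fun _ ↦ μ)
  set L := 4 * √(Fintype.card κ * Real.log (2 * Fintype.card κ * Fintype.card ι))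
  let block (b : κ) (X : κ × ι → E) : ι → E := X ∘ Prod.mk b
  let cost (s : κ → Bool) (z : (κ × ι → E) × (κ × ι → E)) : ℝ :=
    matchingCost (selectBy (s ∘ Prod.fst) z.1 z.2) (selectBy (s ∘ Prod.fst) z.2 z.1)
  have hcost_meas (s : κ → Bool) : Measurable (cost s) :=
    have hmeas := (measurePreserving_selectBy μ (s ∘ Prod.fst (α := κ) (β := ι))).measurable
    measurable_matchingCost hmeas.fst hmeas.snd
  calc Fintype.card κ * expMatchingCost ι μ
      = ∫⁻ z, ∑ b, ENNReal.ofReal (matchingCost (block b z.1) (block b z.2)) ∂P := by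
        rw [lintegral_finsetSum' _ fun b _ ↦ ?_]
        · simp_rw [block, P, lintegral_matchingCost_comp_of_injective μ (Prod.mk_right_injective _)]
          simp
        · exact (measurable_matchingCost (by fun_prop) (by fun_prop)).ennreal_ofReal.aemeasurable
    _ ≤ ENNReal.ofReal L * ∫⁻ z, ∫⁻ s, ENNReal.ofReal (cost s z) ∂coinFlips κ ∂P := by
        rw [← lintegral_const_mul' _ _ ofReal_ne_top]
        exact lintegral_mono fun z ↦
          sum_ofReal_matchingCost_le_mul_lintegral_selectBy z.1 z.2
    _ = ENNReal.ofReal L * expMatchingCost (κ × ι) μ := by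
        rw [lintegral_lintegral_swap]
        · simp_rw [cost, P, lintegral_matchingCost_selectBy]
          simp
        · exact (measurable_from_prod_countable_left fun s ↦
            (hcost_meas s).ennreal_ofReal).aemeasurable

end ExpectedMatchingCost

section EmpiricalMeasure

variable {n : ℕ} {E F : Type*} [MeasurableSpace E] [MeasurableSpace F]

instance (μ : Measure E) [IsProbabilityMeasure μ] : IsProbabilityMeasure (sampleMeasure μ n) :=
  inferInstanceAs (IsProbabilityMeasure (Measure.pi _))

theorem lintegral_empiricalMeasure (X : Fin n → E) {f : E → ℝ≥0∞} (hf : Measurable f) :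
    ∫⁻ x, f x ∂empiricalMeasure n X = (n : ℝ≥0∞)⁻¹ * ∑ i, f (X i) := by
  simp [empiricalMeasure, lintegral_dirac' _ hf]

theorem integrable_empiricalMeasure (hn : n ≠ 0) (X : Fin n → E) {f : E → ℝ}
    (hf : StronglyMeasurable f) : Integrable f (empiricalMeasure n X) :=
  (integrable_finsetSum_measure.2 fun _ _ ↦ integrable_dirac' hf enorm_lt_top).smul_measure
    (by simpa using hn)

theorem integral_empiricalMeasure (X : Fin n → E) {f : E → ℝ} (hf : StronglyMeasurable f) :
    ∫ x, f x ∂empiricalMeasure n X = (n : ℝ)⁻¹ * ∑ i, f (X i) := by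
  rw [empiricalMeasure, integral_smul_measure,
    integral_finsetSum_measure fun _ _ ↦ integrable_dirac' hf enorm_lt_top]
  simp [integral_dirac' _ _ hf]

theorem map_empiricalMeasure (X : Fin n → E) {g : E → F} (hg : Measurable g) :
    (empiricalMeasure n X).map g = empiricalMeasure n (g ∘ X) := by
  simp [empiricalMeasure, Measure.map_smul, Measure.map_finset_sum hg.aemeasurable,
    Measure.map_dirac' hg]

theorem empiricalMeasure_comp_perm (X : Fin n → E) (σ : Equiv.Perm (Fin n)) :
    empiricalMeasure n (X ∘ σ) = empiricalMeasure n X := by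
  simp only [empiricalMeasure, Function.comp_apply, Equiv.sum_comp σ fun i ↦ Measure.dirac (X i)]

theorem measurable_empiricalMeasure : Measurable (empiricalMeasure (E := E) n) := by
  refine Measure.measurable_of_measurable_coe _ fun s hs ↦ ?_
  simp only [empiricalMeasure, Measure.smul_apply, Measure.finsetSum_apply, smul_eq_mul,
    Measure.dirac_apply' _ hs]
  have : Measurable (s.indicator (1 : E → ℝ≥0∞)) := measurable_one.indicator hs
  fun_prop

theorem map_measure_bind (μ : Measure E) {G : Type*} [MeasurableSpace G] {κ : E → Measure F}
    (hκ : Measurable κ) {g : F → G} (hg : Measurable g) :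
    (μ.bind κ).map g = μ.bind fun x ↦ (κ x).map g := by
  have hmap : Measurable fun x ↦ (κ x).map g := (Measure.measurable_map g hg).comp hκ
  ext s hs
  rw [Measure.map_apply hg hs, Measure.bind_apply (hg hs) hκ.aemeasurable,
    Measure.bind_apply hs hmap.aemeasurable]
  simp only [Measure.map_apply hg hs]

theorem bind_sampleMeasure_empiricalMeasure (hn : n ≠ 0) (μ : Measure E) [IsProbabilityMeasure μ] :
    (sampleMeasure μ n).bind (empiricalMeasure n) = μ := by
  ext s hs
  have heval (i : Fin n) : ∫⁻ X, s.indicator 1 (X i) ∂sampleMeasure μ n = μ s := by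
    rw [← lintegral_indicator_one hs]
    exact (measurePreserving_eval (fun _ ↦ μ) i).lintegral_comp (measurable_one.indicator hs)
  rw [Measure.bind_apply hs measurable_empiricalMeasure.aemeasurable]
  simp only [empiricalMeasure, Measure.smul_apply, Measure.finsetSum_apply, smul_eq_mul,
    Measure.dirac_apply' _ hs]
  rw [lintegral_const_mul' _ _ (by simpa using hn), lintegral_finsetSum]
  · simp_rw [heval]
    simp [← mul_assoc, ENNReal.inv_mul_cancel (Nat.cast_ne_zero.2 hn)]
  · exact fun i _ ↦ (measurable_one.indicator hs).comp (measurable_pi_apply i)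

end EmpiricalMeasure

theorem exists_measurable_rearrangement {ι E : Type*} [Fintype ι] [PseudoMetricSpace E]
    [SecondCountableTopology E] [MeasurableSpace E] [OpensMeasurableSpace E] (X : ι → E) :
    ∃ R : (ι → E) → ι → E, Measurable R ∧
      ∀ Y, (∃ σ : Equiv.Perm ι, R Y = Y ∘ σ) ∧ ∑ i, dist (X i) (R Y i) = matchingCost X Y := by
  obtain ⟨e, he⟩ := exists_surjective_nat (Equiv.Perm ι)
  have hex (Y : ι → E) : ∃ k, ∑ i, dist (X i) (Y (e k i)) = matchingCost X Y :=
    he.exists.1 (exists_perm_sum_dist_eq_matchingCost X Y)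
  classical
  have hfind : Measurable fun Y ↦ Nat.find (hex Y) := measurable_find hex fun k ↦
    measurableSet_eq_fun (by fun_prop) (measurable_matchingCost measurable_const measurable_id)
  have heval : Measurable fun p : ℕ × (ι → E) ↦ p.2 ∘ e p.1 :=
    measurable_from_prod_countable_right fun k ↦
      measurable_pi_lambda _ fun i ↦ measurable_pi_apply (e k i)
  exact ⟨fun Y ↦ Y ∘ e (Nat.find (hex Y)), heval.comp (hfind.prodMk measurable_id),
    fun Y ↦ ⟨⟨_, rfl⟩, Nat.find_spec (hex Y)⟩⟩

section Wasserstein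

variable {E : Type*} [MetricSpace E] [MeasurableSpace E]

theorem Wp_one_le {μ ν : Measure E} {γ : Measure (E × E)} (hfst : γ.map Prod.fst = μ)
    (hsnd : γ.map Prod.snd = ν) : Wp 1 μ ν ≤ ∫⁻ z, edist z.1 z.2 ∂γ := by
  simpa [Wp] using iInf₂_le (f := fun (γ : Measure (E × E)) _ ↦ ∫⁻ z, edist z.1 z.2 ∂γ) γ
    ⟨hfst, hsnd⟩

theorem edist_integral_le_Wp_one {f : E → ℝ} (hf : LipschitzWith 1 f) {μ ν : Measure E}
    (hμ : Integrable f μ) (hν : Integrable f ν) :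
    edist (∫ x, f x ∂μ) (∫ x, f x ∂ν) ≤ Wp 1 μ ν := by
  refine le_iInf₂ ?_
  rintro γ ⟨rfl, rfl⟩
  have hfst : Integrable (fun z ↦ f z.1) γ := hμ.comp_measurable measurable_fst
  have hsnd : Integrable (fun z ↦ f z.2) γ := hν.comp_measurable measurable_snd
  rw [integral_map measurable_fst.aemeasurable hμ.aestronglyMeasurable,
    integral_map measurable_snd.aemeasurable hν.aestronglyMeasurable, edist_eq_enorm_sub,
    ← integral_sub hfst hsnd]
  simp only [ENNReal.rpow_one, one_div_one]
  refine (enorm_integral_le_lintegral_enorm _).trans (lintegral_mono fun z ↦ ?_)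
  simpa [edist_eq_enorm_sub] using hf z.1 z.2

theorem HasFiniteMoment.integrable_of_lipschitzWith [OpensMeasurableSpace E] {μ : Measure E}
    [IsFiniteMeasure μ] (hμ : HasFiniteMoment 1 μ) {K : NNReal} {f : E → ℝ}
    (hf : LipschitzWith K f) : Integrable f μ := by
  obtain ⟨x₀, hx₀⟩ := hμ
  have hdist : Integrable (fun x ↦ dist x x₀) μ := by
    refine ⟨(continuous_id.dist continuous_const).aestronglyMeasurable, ?_⟩
    simpa [HasFiniteIntegral, ← ofReal_norm, edist_dist, lt_top_iff_ne_top] using hx₀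
  refine ((integrable_const ‖f x₀‖).add (hdist.const_mul K)).mono'
    hf.continuous.aestronglyMeasurable (.of_forall fun x ↦ ?_)
  exact norm_le_norm_add_const_of_dist_le (hf.dist_le_mul x x₀)

theorem ofReal_matchingCost_le_Wp_one_add [OpensMeasurableSpace E] {n : ℕ} (hn : n ≠ 0)
    {μ : Measure E} [IsFiniteMeasure μ] (hμ : HasFiniteMoment 1 μ) (X Y : Fin n → E) :
    ENNReal.ofReal (matchingCost X Y) ≤
      n * (Wp 1 (empiricalMeasure n X) μ + Wp 1 (empiricalMeasure n Y) μ) := by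
  obtain ⟨f, hf, hf_sum⟩ := exists_lipschitzWith_sum_sub_eq_matchingCost X Y
  have hfm : StronglyMeasurable f := hf.continuous.stronglyMeasurable
  have hcost : matchingCost X Y =
      n * (∫ x, f x ∂empiricalMeasure n X - ∫ x, f x ∂empiricalMeasure n Y) := by
    rw [← hf_sum, integral_empiricalMeasure X hfm, integral_empiricalMeasure Y hfm, ← mul_sub,
      mul_inv_cancel_left₀ (Nat.cast_ne_zero.2 hn), Finset.sum_sub_distrib]
  have hWp (Z : Fin n → E) : edist (∫ x, f x ∂empiricalMeasure n Z) (∫ x, f x ∂μ) ≤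
      Wp 1 (empiricalMeasure n Z) μ :=
    edist_integral_le_Wp_one hf (integrable_empiricalMeasure hn Z hfm)
      (hμ.integrable_of_lipschitzWith hf)
  rw [hcost, ENNReal.ofReal_mul n.cast_nonneg, ENNReal.ofReal_natCast]
  gcongr
  calc ENNReal.ofReal (∫ x, f x ∂empiricalMeasure n X - ∫ x, f x ∂empiricalMeasure n Y)
      ≤ edist (∫ x, f x ∂empiricalMeasure n X) (∫ x, f x ∂empiricalMeasure n Y) := by
        rw [edist_dist, Real.dist_eq]
        exact ENNReal.ofReal_le_ofReal (le_abs_self _)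
    _ ≤ _ := (edist_triangle_right _ _ (∫ x, f x ∂μ)).trans (add_le_add (hWp X) (hWp Y))

variable [SecondCountableTopology E] [OpensMeasurableSpace E] {n : ℕ} (μ : Measure E)
  [IsProbabilityMeasure μ]

theorem Wp_one_empiricalMeasure_le_lintegral_matchingCost (hn : n ≠ 0) (X : Fin n → E) :
    n * Wp 1 (empiricalMeasure n X) μ ≤
      ∫⁻ Y, ENNReal.ofReal (matchingCost X Y) ∂sampleMeasure μ n := by
  obtain ⟨R, hR, hR_opt⟩ := exists_measurable_rearrangement X
  let pairing (Y : Fin n → E) : Fin n → E × E := fun i ↦ (X i, R Y i)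
  let coupling : Measure (E × E) :=
    (sampleMeasure μ n).bind fun Y ↦ empiricalMeasure n (pairing Y)
  have hmeas : Measurable fun Y ↦ empiricalMeasure n (pairing Y) :=
    measurable_empiricalMeasure.comp (by fun_prop)
  have hfst : coupling.map Prod.fst = empiricalMeasure n X := by
    have hX (Y : Fin n → E) : Prod.fst ∘ pairing Y = X := rfl
    simp_rw [coupling, map_measure_bind _ hmeas measurable_fst,
      map_empiricalMeasure _ measurable_fst, hX, Measure.bind_const, measure_univ, one_smul]
  have hsnd : coupling.map Prod.snd = μ := by
    have hY (Y : Fin n → E) : empiricalMeasure n (Prod.snd ∘ pairing Y) = empiricalMeasure n Y := by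
      obtain ⟨σ, hσ⟩ := (hR_opt Y).1
      rw [← empiricalMeasure_comp_perm Y σ, ← hσ]
      rfl
    simp_rw [coupling, map_measure_bind _ hmeas measurable_snd,
      map_empiricalMeasure _ measurable_snd, hY, bind_sampleMeasure_empiricalMeasure hn]
  have hcost (Y : Fin n → E) : n * ∫⁻ z, edist z.1 z.2 ∂empiricalMeasure n (pairing Y) =
      ENNReal.ofReal (matchingCost X Y) := by
    rw [lintegral_empiricalMeasure _ measurable_edist, ← mul_assoc,
      ENNReal.mul_inv_cancel (Nat.cast_ne_zero.2 hn) (natCast_ne_top n), one_mul,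
      ← (hR_opt Y).2, ENNReal.ofReal_sum_of_nonneg fun _ _ ↦ dist_nonneg]
    simp only [pairing, edist_dist]
  calc n * Wp 1 (empiricalMeasure n X) μ
      ≤ n * ∫⁻ z, edist z.1 z.2 ∂coupling := mul_le_mul_right (Wp_one_le hfst hsnd) _
    _ = ∫⁻ Y, ENNReal.ofReal (matchingCost X Y) ∂sampleMeasure μ n := by
        rw [Measure.lintegral_bind hmeas.aemeasurable measurable_edist.aemeasurable,
          ← lintegral_const_mul' _ _ (natCast_ne_top n)]
        exact lintegral_congr hcost

theorem mul_expWp_one_le_expMatchingCost (hn : n ≠ 0) :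
    n * expWp 1 μ n ≤ expMatchingCost (Fin n) μ := by
  rw [expWp, ← lintegral_const_mul' _ _ (natCast_ne_top n), expMatchingCost,
    lintegral_prod _ (measurable_matchingCost measurable_fst
      measurable_snd).ennreal_ofReal.aemeasurable]
  exact lintegral_mono (Wp_one_empiricalMeasure_le_lintegral_matchingCost μ hn)

theorem expMatchingCost_le_mul_expWp_one (hn : n ≠ 0) (hμ : HasFiniteMoment 1 μ) :
    expMatchingCost (Fin n) μ ≤ n * (2 * expWp 1 μ n) := by
  let W (X : Fin n → E) : ℝ≥0∞ := Wp 1 (empiricalMeasure n X) μ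
  calc expMatchingCost (Fin n) μ
      = ∫⁻ X, ∫⁻ Y, ENNReal.ofReal (matchingCost X Y) ∂sampleMeasure μ n ∂sampleMeasure μ n :=
        lintegral_prod _ (measurable_matchingCost measurable_fst
          measurable_snd).ennreal_ofReal.aemeasurable
    _ ≤ ∫⁻ X, ∫⁻ Y, n * (W X + W Y) ∂sampleMeasure μ n ∂sampleMeasure μ n :=
        lintegral_mono fun X ↦ lintegral_mono fun Y ↦ ofReal_matchingCost_le_Wp_one_add hn hμ X Y
    _ = ∫⁻ X, n * (W X + expWp 1 μ n) ∂sampleMeasure μ n := by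
        simp_rw [lintegral_const_mul' _ _ (natCast_ne_top n), lintegral_add_left measurable_const]
        simp [W, expWp]
    _ = n * (2 * expWp 1 μ n) := by
        rw [lintegral_const_mul' _ _ (natCast_ne_top n), lintegral_add_right _ measurable_const]
        simp [W, expWp, two_mul]

theorem expWp_one_le_mul_expWp_one_mul (hμ : HasFiniteMoment 1 μ) {m n : ℕ} (hm : m ≠ 0)
    (hn : n ≠ 0) :
    expWp 1 μ n ≤ ENNReal.ofReal (8 * √(m * Real.log (2 * m * n))) * expWp 1 μ (m * n) := by
  have : NeZero m := ⟨hm⟩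
  have : NeZero n := ⟨hn⟩
  have hmn : m * n ≠ 0 := mul_ne_zero hm hn
  rw [← ENNReal.mul_le_mul_iff_right (Nat.cast_ne_zero.2 hmn) (natCast_ne_top (m * n))]
  set S := √(m * Real.log (2 * m * n))
  calc ((m * n : ℕ) : ℝ≥0∞) * expWp 1 μ n
      = m * (n * expWp 1 μ n) := by rw [Nat.cast_mul, mul_assoc]
    _ ≤ m * expMatchingCost (Fin n) μ := by gcongr; exact mul_expWp_one_le_expMatchingCost μ hn
    _ ≤ ENNReal.ofReal (4 * S) * expMatchingCost (Fin m × Fin n) μ := by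
        simpa only [Fintype.card_fin] using
          card_mul_expMatchingCost_le (κ := Fin m) (ι := Fin n) μ
    _ = ENNReal.ofReal (4 * S) * expMatchingCost (Fin (m * n)) μ := by
        rw [expMatchingCost_congr μ finProdFinEquiv]
    _ ≤ ENNReal.ofReal (4 * S) * ((m * n : ℕ) * (2 * expWp 1 μ (m * n))) := by
        gcongr
        exact expMatchingCost_le_mul_expWp_one μ hmn hμ
    _ = (m * n : ℕ) * (ENNReal.ofReal (8 * S) * expWp 1 μ (m * n)) := by
        have h8 : ENNReal.ofReal (8 * S) = ENNReal.ofReal (4 * S) * 2 := by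
          rw [← ofReal_ofNat 2, ← ENNReal.ofReal_mul (by positivity)]
          ring_nf
        rw [h8]
        ring

end Wasserstein

/-- **Lemma (w1lb).** Let `E` be a separable metric space and `μ ∈ 𝒫₁(E)`. Then for
all `m, n ∈ ℕ`,
`𝔼[W₁(μ_{mn}, μ)] ≥ (1/(11 √(m ln(2mn)))) 𝔼[W₁(μ_n, μ)]`. -/
theorem stmt_18 {E : Type*} [MetricSpace E] [TopologicalSpace.SeparableSpace E]
    [MeasurableSpace E] [BorelSpace E]
    (μ : Measure E) [IsProbabilityMeasure μ] (hμ : HasFiniteMoment 1 μ)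
    (m n : ℕ) (hm : 1 ≤ m) (hn : 1 ≤ n) :
    ENNReal.ofReal (1 / (11 * Real.sqrt (m * Real.log (2 * m * n)))) * expWp 1 μ n ≤
      expWp 1 μ (m * n) := by
  have := UniformSpace.secondCountable_of_separable E
  have hlog : 0 < Real.log (2 * m * n) := by
    have : (1 : ℝ) ≤ m * n := by exact_mod_cast one_le_mul_of_one_le_of_one_le hm hn
    exact Real.log_pos (by linarith)
  have hpos : 0 < 11 * √(m * Real.log (2 * m * n)) := by positivity
  rw [one_div, ENNReal.ofReal_inv_of_pos hpos,
    ENNReal.inv_mul_le_iff (ENNReal.ofReal_pos.2 hpos).ne' ofReal_ne_top]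
  refine (expWp_one_le_mul_expWp_one_mul μ hμ (Nat.ne_of_gt hm) (Nat.ne_of_gt hn)).trans ?_
  gcongr
  norm_num
end
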